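/- arXiv:2405.12771 — 2 statements merged into one kernel-verified Lean document; each statement's English description precedes it below -/
import Mathlib

section
/- Let k be any field, let ψ(x, u₁,…,uₙ) be an existential ring formula, and let a₁,…,aₙ ∈ k. Then the rational function field k(t) satisfies ∀x ψ(x, a₁,…,aₙ) if and only if both of the following hold: (i) k(t) ⊨ ψ(t, a₁,…,aₙ), and (ii) k(t) ⊨ ψ(b, a₁,…,aₙ) for every b ∈ k. -/
open FirstOrder Language

attribute [local instance] FirstOrder.Ring.compatibleRingOfRing

/-- A ring homomorphism from a field is an embedding of ring structures. -/
noncomputable def ringEmb {K L : Type*} [Field K] [Field L] (f : K →+* L) :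
    K ↪[Language.ring] L where
  toFun := f
  inj' := f.injective
  map_fun' := fun {n} g => by
    cases g <;> simp
  map_rel' := fun {n} r => by cases r

/-- let `k` be any field, `ψ(x, u₁, …, uₙ)` an existential ring formula
(given as `ψ₀.exs` with `ψ₀` quantifier-free) and `a₁, …, aₙ ∈ k`.  Then
`k(t) ⊨ ∀ x ψ(x, a⃗)` iff `k(t) ⊨ ψ(t, a⃗)` and `k(t) ⊨ ψ(b, a⃗)` for every `b ∈ k`. -/
theorem stmt14 (k : Type*) [Field k]
    (n s : ℕ) (ψ : Language.ring.BoundedFormula (Unit ⊕ Fin n) s) (hψ : ψ.IsQF)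
    (a : Fin n → k) :
    (∀ x : RatFunc k, (ψ.exs : Language.ring.Formula _).Realize
        (Sum.elim (fun _ : Unit => x) (fun i => algebraMap k (RatFunc k) (a i)))) ↔
      ((ψ.exs : Language.ring.Formula _).Realize
          (Sum.elim (fun _ : Unit => (RatFunc.X : RatFunc k))
            (fun i => algebraMap k (RatFunc k) (a i))) ∧
        ∀ b : k, (ψ.exs : Language.ring.Formula _).Realize
          (Sum.elim (fun _ : Unit => algebraMap k (RatFunc k) b)
            (fun i => algebraMap k (RatFunc k) (a i)))) := by
  constructor
  · intro h
    exact ⟨h _, fun b => h _⟩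
  · rintro ⟨hX, hk⟩ x
    by_cases hx : ∃ c, x = RatFunc.C c
    · obtain ⟨c, rfl⟩ := hx
      exact hk c
    · have ht := RatFunc.transcendental_of_ne_C x hx
      let f : RatFunc k →ₐ[k] RatFunc k :=
        (IntermediateField.val _).comp (RatFunc.algEquivOfTranscendental x ht).toAlgHom
      have hfX : f RatFunc.X = x := RatFunc.algEquivOfTranscendental_X x ht
      rw [BoundedFormula.realize_exs] at hX ⊢
      obtain ⟨xs, hxs⟩ := hX
      refine ⟨f ∘ xs, ?_⟩
      have := hψ.isExistential.realize_embedding (ringEmb (f : RatFunc k →+* RatFunc k)) hxs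
      convert this using 1
      · funext i
        rcases i with i | i
        · exact hfX.symm
        · exact (f.commutes (a i)).symm
      · rfl
end

section
/- Let k be a field and K = k((t)) the field of formal Laurent series over k. Every k-algebra homomorphism σ : K → K preserves the t-adic valuation ring: for every nonzero x ∈ K, v_t(x) ≥ 0 if and only if v_t(σ(x)) ≥ 0 (note σ(x) ≠ 0 since σ is injective). Moreover, if σ is a k-algebra automorphism of K, then v_t(σ(x)) = v_t(x) for every nonzero x ∈ K. -/
theorem aux_root {k : Type*} [Field k] (f : PowerSeries k) (hf : PowerSeries.constantCoeff f = 1)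
    (n : ℕ) (hn : (n : k) ≠ 0) : ∃ g : PowerSeries k, g ^ n = f := by
  have hn0 : n ≠ 0 := by rintro rfl; simp at hn
  have H := HenselianRing.is_henselian (I := Ideal.span {(PowerSeries.X : PowerSeries k)})
    (Polynomial.X ^ n - Polynomial.C f) (Polynomial.monic_X_pow_sub_C f hn0) 1
    (by
      rw [Ideal.mem_span_singleton, PowerSeries.X_dvd_iff]
      simp [hf])
    (by
      apply IsUnit.map
      rw [PowerSeries.isUnit_iff_constantCoeff]
      simp [Polynomial.derivative_X_pow, hn])
  obtain ⟨g, hg, -⟩ := H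
  refine ⟨g, ?_⟩
  simpa [sub_eq_zero] using hg

theorem aux_lift {k : Type*} [Field k] (x : LaurentSeries k) (hx : 0 ≤ x.order) :
    ∃ f : PowerSeries k, HahnSeries.ofPowerSeries ℤ k f = x := by
  refine ⟨PowerSeries.mk fun n => x.coeff n, ?_⟩
  ext i
  rw [PowerSeries.coeff_coe]
  split_ifs with h
  · exact (HahnSeries.coeff_eq_zero_of_lt_order (h.trans_le hx)).symm
  · rw [PowerSeries.coeff_mk, Int.natAbs_of_nonneg (not_lt.mp h)]

theorem aux_C {k : Type*} [Field k] (σ : LaurentSeries k →ₐ[k] LaurentSeries k) (c : k) :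
    σ (HahnSeries.C c) = HahnSeries.C c := by
  rw [← LaurentSeries.algebraMap_apply]
  exact σ.commutes c

theorem aux_C_coeff {k : Type*} [Field k] (c : k) (i : ℤ) (hi : i ≠ 0) :
    (HahnSeries.C c : LaurentSeries k).coeff i = 0 := by
  rw [HahnSeries.C_apply, HahnSeries.coeff_single_of_ne hi]

theorem aux_inv {k : Type*} [Field k] (x : LaurentSeries k) (hx : x ≠ 0) :
    (x⁻¹).order = - x.order := by
  have h := HahnSeries.order_mul hx (inv_ne_zero hx)
  rw [mul_inv_cancel₀ hx, HahnSeries.order_one] at h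
  omega

theorem aux_step1 {k : Type*} [Field k] (σ : LaurentSeries k →ₐ[k] LaurentSeries k)
    (x : LaurentSeries k) (hx : 0 ≤ x.order) : 0 ≤ (σ x).order := by
  by_contra! hneg
  obtain ⟨f, rfl⟩ := aux_lift x hx
  set c := PowerSeries.constantCoeff f with hc
  set F : PowerSeries k := f + PowerSeries.C (1 - c) with hF
  have hF1 : PowerSeries.constantCoeff F = 1 := by simp [hF, hc]
  set s := σ (HahnSeries.ofPowerSeries ℤ k f) with hs
  have hs0 : s ≠ 0 := by
    intro h; rw [h, HahnSeries.order_zero] at hneg; exact lt_irrefl _ hneg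
  have hy : σ (HahnSeries.ofPowerSeries ℤ k F) = s + HahnSeries.C (1 - c) := by
    rw [hF, map_add, map_add, HahnSeries.ofPowerSeries_C, aux_C]
  set y := σ (HahnSeries.ofPowerSeries ℤ k F) with hyd
  have hyc : y.coeff s.order ≠ 0 := by
    rw [hy, HahnSeries.coeff_add, aux_C_coeff _ _ hneg.ne, add_zero]
    exact fun h => hs0 (HahnSeries.coeff_order_eq_zero.mp h)
  have hyneg : y.order < 0 := (HahnSeries.order_le_of_coeff_ne_zero hyc).trans_lt hneg
  obtain ⟨n, hn, hlt⟩ : ∃ n : ℕ, (n : k) ≠ 0 ∧ y.order.natAbs < n := by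
    by_cases h : ((y.order.natAbs + 1 : ℕ) : k) = 0
    · refine ⟨y.order.natAbs + 1 + 1, ?_, by omega⟩
      rw [Nat.cast_succ, h]; simp
    · exact ⟨_, h, by omega⟩
  obtain ⟨g, hg⟩ := aux_root F hF1 n hn
  have h2 : y.order = n • (σ (HahnSeries.ofPowerSeries ℤ k g)).order := by
    rw [← HahnSeries.order_pow, hyd, ← hg, map_pow, map_pow]
  have h3 : (n : ℤ) ∣ y.order := ⟨_, by rw [h2, nsmul_eq_mul]⟩
  have := Int.le_of_dvd (by omega) ((dvd_neg).mpr h3)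
  omega

theorem aux_step2 {k : Type*} [Field k] (σ : LaurentSeries k →ₐ[k] LaurentSeries k)
    (x : LaurentSeries k) (hx0 : x ≠ 0) (hx : 0 ≤ (σ x).order) : 0 ≤ x.order := by
  by_contra! hneg
  set c := (σ x).coeff 0 with hc
  set z := x - HahnSeries.C c with hz
  have hzc : z.coeff x.order ≠ 0 := by
    rw [hz, HahnSeries.coeff_sub, aux_C_coeff _ _ hneg.ne, sub_zero]
    exact fun h => hx0 (HahnSeries.coeff_order_eq_zero.mp h)
  have hz0 : z ≠ 0 := by rintro h; simp [h] at hzc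
  have hzneg : z.order < 0 := (HahnSeries.order_le_of_coeff_ne_zero hzc).trans_lt hneg
  have hσz : σ z ≠ 0 := by simpa using hz0
  have h1 := aux_step1 σ z⁻¹ (by rw [aux_inv z hz0]; omega)
  rw [map_inv₀, aux_inv _ hσz] at h1
  have hne : (σ z).coeff (σ z).order ≠ 0 := fun h => hσz (HahnSeries.coeff_order_eq_zero.mp h)
  apply hne
  have e : σ z = σ x - HahnSeries.C c := by rw [hz, map_sub, aux_C]
  rcases eq_or_ne (σ z).order 0 with h0 | h0
  · rw [h0, e, HahnSeries.coeff_sub, ← hc]; simp [HahnSeries.C_apply]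
  · generalize (σ z).order = j at *
    rw [e, HahnSeries.coeff_sub, aux_C_coeff _ _ h0, sub_zero]
    exact HahnSeries.coeff_eq_zero_of_lt_order (by omega)

theorem aux_zpow {k : Type*} [Field k] (x : LaurentSeries k) (hx : x ≠ 0) (n : ℤ) :
    (x ^ n).order = n * x.order := by
  cases n with
  | ofNat n => simp [HahnSeries.order_pow]
  | negSucc n =>
    rw [zpow_negSucc, aux_inv _ (pow_ne_zero _ hx), HahnSeries.order_pow, nsmul_eq_mul,
      Int.negSucc_eq]
    push_cast
    ring

theorem aux_step3 {k : Type*} [Field k] (σ : LaurentSeries k →ₐ[k] LaurentSeries k)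
    (x : LaurentSeries k) (hx : x ≠ 0) :
    (σ x).order = x.order * (σ (HahnSeries.single 1 1)).order := by
  set T : LaurentSeries k := HahnSeries.single 1 1 with hT
  have hT0 : T ≠ 0 := by simp [hT]
  have hTo : T.order = 1 := HahnSeries.order_single one_ne_zero
  have hTn : T ^ x.order ≠ 0 := zpow_ne_zero _ hT0
  set u := x * (T ^ x.order)⁻¹ with hu
  have hu0 : u ≠ 0 := mul_ne_zero hx (inv_ne_zero hTn)
  have huo : u.order = 0 := by
    rw [hu, HahnSeries.order_mul hx (inv_ne_zero hTn), aux_inv _ hTn, aux_zpow _ hT0, hTo]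
    ring
  have hσu0 : σ u ≠ 0 := by simpa using hu0
  have hσT : σ T ≠ 0 := by simpa using hT0
  have h1 := aux_step1 σ u huo.ge
  have h2 := aux_step1 σ u⁻¹ (by rw [aux_inv _ hu0]; omega)
  rw [map_inv₀, aux_inv _ hσu0] at h2
  have e : x = u * T ^ x.order := by rw [hu, inv_mul_cancel_right₀ hTn]
  have e2 : σ x = σ u * (σ T) ^ x.order := by
    rw [← map_zpow₀, ← map_mul, ← e]
  rw [e2, HahnSeries.order_mul hσu0 (zpow_ne_zero _ hσT), aux_zpow _ hσT]
  omega

/-- every `k`-algebra endomorphism `σ` of `K = k((t))` preserves the `t`-adic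
valuation ring (for nonzero `x`, `v_t(x) ≥ 0` iff `v_t(σ x) ≥ 0`), and every `k`-algebra
automorphism preserves the valuation (`v_t(σ x) = v_t(x)` for nonzero `x`). -/
theorem stmt18 (k : Type*) [Field k] :
    (∀ σ : LaurentSeries k →ₐ[k] LaurentSeries k, ∀ x : LaurentSeries k, x ≠ 0 →
      (0 ≤ x.order ↔ 0 ≤ (σ x).order)) ∧
    (∀ σ : LaurentSeries k ≃ₐ[k] LaurentSeries k, ∀ x : LaurentSeries k, x ≠ 0 →
      (σ x).order = x.order) := by
  refine ⟨fun σ x hx => ⟨aux_step1 σ x, aux_step2 σ x hx⟩, fun σ x hx => ?_⟩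
  set T : LaurentSeries k := HahnSeries.single 1 1 with hT
  have hT0 : T ≠ 0 := by simp [hT]
  have hTo : T.order = 1 := HahnSeries.order_single one_ne_zero
  have h : ∀ y : LaurentSeries k, y ≠ 0 → (σ y).order = y.order * (σ T).order :=
    fun y hy => aux_step3 (σ : LaurentSeries k →ₐ[k] LaurentSeries k) y hy
  have hpos : 0 ≤ (σ T).order :=
    aux_step1 (σ : LaurentSeries k →ₐ[k] LaurentSeries k) T (by omega)
  have h1 := h (σ.symm T) (by simpa using hT0)
  rw [AlgEquiv.apply_symm_apply, hTo] at h1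
  have h2 : (σ T).order = 1 :=
    Int.eq_one_of_dvd_one hpos ⟨_, by rw [mul_comm]; exact h1⟩
  rw [h x hx, h2, mul_one]
end
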